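/- arXiv:2204.09156 — 2 statements merged into one kernel-verified Lean document; each statement's English description precedes it below -/
import Mathlib

section
/- Let p > 1, 0 ≤ a < 1, C > 0, δ > 0, and T > 1. Suppose F : [1,T) → ℝ is differentiable with F(M) ≥ 0 and M^{a} F'(M) ≥ C (δ + F(M))^{p} for all M ∈ [1,T). Then T^{1−a} ≤ 1 + ((1−a)/(C(p−1))) δ^{1−p}; in particular there is a constant C' = C'(a, p, C) such that T ≤ C' max(1, δ^{−(p−1)/(1−a)}). -/
open Real Set

/-!
Put `u = δ + F`. Separating variables in `C u ^ p ≤ t ^ a u'` shows that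
`(1 - a) u ^ (1 - p) + C (p - 1) t ^ (1 - a)` is nonincreasing. Its first term stays nonnegative,
so the second is bounded by the initial value of the sum, which bounds the lifespan.
-/

section SeparationOfVariables

variable {a p C : ℝ} {u u' : ℝ → ℝ}

theorem antitoneOn_rpow_add_rpow_of_rpow_le_rpow_mul_deriv {D : Set ℝ} (hD : Convex ℝ D)
    (hD₀ : D ⊆ Ici 0) (ha : a ≤ 1) (hp : 1 ≤ p) (hu : ContinuousOn u D)
    (hu₀ : ∀ t ∈ D, 0 < u t) (hu' : ∀ t ∈ interior D, HasDerivAt u (u' t) t)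
    (hode : ∀ t ∈ interior D, C * u t ^ p ≤ t ^ a * u' t) :
    AntitoneOn (fun t ↦ (1 - a) * u t ^ (1 - p) + C * (p - 1) * t ^ (1 - a)) D := by
  have ht₀ : ∀ t ∈ interior D, 0 < t := fun t ht ↦ by
    simpa only [interior_Ici, mem_Ioi] using interior_mono hD₀ ht
  have hderiv : ∀ t ∈ interior D,
      HasDerivAt (fun t ↦ (1 - a) * u t ^ (1 - p) + C * (p - 1) * t ^ (1 - a))
        ((1 - a) * (p - 1) * (C * t ^ (-a) - u' t * u t ^ (-p))) t := fun t ht ↦ by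
    have hu_pow := (hu' t ht).rpow_const (p := 1 - p) (.inl (hu₀ t (interior_subset ht)).ne')
    have ht_pow := hasDerivAt_rpow_const (p := 1 - a) (.inl (ht₀ t ht).ne')
    refine ((hu_pow.const_mul (1 - a)).add (ht_pow.const_mul (C * (p - 1)))).congr_deriv ?_
    rw [sub_sub_cancel_left, sub_sub_cancel_left]
    ring
  refine antitoneOn_of_hasDerivWithinAt_nonpos hD ?_
    (fun t ht ↦ (hderiv t ht).hasDerivWithinAt) fun t ht ↦ ?_
  · exact ((hu.rpow_const fun t ht ↦ .inl (hu₀ t ht).ne').const_mul _).add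
      ((continuous_id.rpow_const fun _ ↦ .inr (sub_nonneg.2 ha)).continuousOn.const_mul _)
  · have hseparated : C * t ^ (-a) ≤ u' t * u t ^ (-p) := by
      have hut := hu₀ t (interior_subset ht)
      rw [rpow_neg (ht₀ t ht).le, rpow_neg hut.le, ← div_eq_mul_inv, ← div_eq_mul_inv,
        div_le_div_iff₀ (rpow_pos_of_pos (ht₀ t ht) a) (rpow_pos_of_pos hut p), mul_comm (u' t)]
      exact hode t ht
    exact mul_nonpos_of_nonneg_of_nonpos
      (mul_nonneg (sub_nonneg.2 ha) (sub_nonneg.2 hp)) (sub_nonpos.2 hseparated)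

theorem rpow_le_add_of_rpow_le_rpow_mul_deriv {s T : ℝ} (hs : 0 ≤ s) (hsT : s < T) (ha : a ≤ 1)
    (hp : 1 < p) (hC : 0 < C) (hu : ContinuousOn u (Ico s T)) (hu₀ : ∀ t ∈ Ico s T, 0 < u t)
    (hu' : ∀ t ∈ Ioo s T, HasDerivAt u (u' t) t)
    (hode : ∀ t ∈ Ioo s T, C * u t ^ p ≤ t ^ a * u' t) :
    T ^ (1 - a) ≤ s ^ (1 - a) + (1 - a) / (C * (p - 1)) * u s ^ (1 - p) := by
  have hanti := antitoneOn_rpow_add_rpow_of_rpow_le_rpow_mul_deriv (convex_Ico s T)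
    (fun t ht ↦ hs.trans ht.1) ha hp.le hu hu₀ (by simpa only [interior_Ico] using hu')
    (by simpa only [interior_Ico] using hode)
  have hCp : 0 < C * (p - 1) := mul_pos hC (sub_pos.2 hp)
  have hbound : ∀ t ∈ Ico s T,
      t ^ (1 - a) ≤ s ^ (1 - a) + (1 - a) / (C * (p - 1)) * u s ^ (1 - p) := fun t ht ↦ by
    have hle := hanti (left_mem_Ico.2 hsT) ht ht.1
    have hnonneg : 0 ≤ (1 - a) * u t ^ (1 - p) :=
      mul_nonneg (sub_nonneg.2 ha) (rpow_nonneg (hu₀ t ht).le _)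
    rw [div_mul_eq_mul_div, ← sub_le_iff_le_add', le_div_iff₀ hCp]
    linarith
  have hT : T ∈ closure (Ico s T) := by
    rw [closure_Ico hsT.ne]
    exact right_mem_Icc.2 hsT.le
  exact le_on_closure hbound
    (continuous_id.rpow_const fun _ ↦ .inr (sub_nonneg.2 ha)).continuousOn continuousOn_const hT

end SeparationOfVariables

theorem le_rpow_inv_mul_max_of_rpow_le_one_add_mul {x y K q : ℝ} (hx : 0 ≤ x) (hy : 0 ≤ y)
    (hK : 0 ≤ K) (hq : 0 < q) (h : x ^ q ≤ 1 + K * y) :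
    x ≤ (1 + K) ^ q⁻¹ * max 1 (y ^ q⁻¹) := by
  have hmax : 1 + K * y ≤ (1 + K) * max 1 y := by
    rw [add_mul, one_mul]
    gcongr
    exacts [le_max_left 1 y, le_max_right 1 y]
  calc x ≤ ((1 + K) * max 1 y) ^ q⁻¹ :=
        (le_rpow_inv_iff_of_pos hx (by positivity) hq).2 (h.trans hmax)
    _ = (1 + K) ^ q⁻¹ * max 1 (y ^ q⁻¹) := by
      rw [mul_rpow (by positivity) (by positivity), rpow_max zero_le_one hy (by positivity),
        one_rpow]

theorem ode_blowup_subcritical_general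
    (p a C : ℝ) (hp : 1 < p) (ha : a < 1) (hC : 0 < C) :
    ∃ C' > (0 : ℝ), ∀ (δ T : ℝ) (F : ℝ → ℝ), 0 < δ → 1 < T →
      ContinuousOn F (Ico 1 T) →
      (∀ M ∈ Ioo 1 T, DifferentiableAt ℝ F M) →
      (∀ M ∈ Ico 1 T, 0 ≤ F M) →
      (∀ M ∈ Ioo 1 T, C * (δ + F M) ^ p ≤ M ^ a * deriv F M) →
      T ^ (1 - a) ≤ 1 + ((1 - a) / (C * (p - 1))) * δ ^ (1 - p) ∧
      T ≤ C' * max 1 (δ ^ (-(p - 1) / (1 - a))) := by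
  have hq : 0 < 1 - a := sub_pos.2 ha
  have hK : 0 < (1 - a) / (C * (p - 1)) := div_pos hq (mul_pos hC (sub_pos.2 hp))
  refine ⟨(1 + (1 - a) / (C * (p - 1))) ^ (1 - a)⁻¹, by positivity, ?_⟩
  intro δ T F hδ hT hF hF' hF₀ hode
  have hlifespan : T ^ (1 - a) ≤ 1 + (1 - a) / (C * (p - 1)) * δ ^ (1 - p) := by
    calc T ^ (1 - a) ≤ 1 ^ (1 - a) + (1 - a) / (C * (p - 1)) * (δ + F 1) ^ (1 - p) :=
          rpow_le_add_of_rpow_le_rpow_mul_deriv zero_le_one hT ha.le hp hC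
            (hF.const_add δ) (fun M hM ↦ add_pos_of_pos_of_nonneg hδ (hF₀ M hM))
            (fun M hM ↦ (hF' M hM).hasDerivAt.const_add δ) hode
      _ ≤ 1 + (1 - a) / (C * (p - 1)) * δ ^ (1 - p) := by
        rw [one_rpow]
        gcongr 1 + _ * ?_
        exact rpow_le_rpow_of_nonpos hδ (le_add_of_nonneg_right (hF₀ 1 (left_mem_Ico.2 hT)))
          (sub_nonpos.2 hp.le)
  have hexponent : δ ^ (-(p - 1) / (1 - a)) = (δ ^ (1 - p)) ^ (1 - a)⁻¹ := by
    rw [← rpow_mul hδ.le, neg_sub, div_eq_mul_inv]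
  rw [hexponent]
  exact ⟨hlifespan, le_rpow_inv_mul_max_of_rpow_le_one_add_mul (by positivity) (by positivity)
    hK.le hq hlifespan⟩

/-- **ODE blow-up lemma, subcritical case** (Fino–Hamza): if `F ≥ 0` is differentiable
on `[1,T)` with `M^a F'(M) ≥ C (δ + F(M))^p` there, where `p > 1`, `0 ≤ a < 1`,
`C, δ > 0`, then `T^{1-a} ≤ 1 + ((1-a)/(C(p-1))) δ^{1-p}`; in particular
`T ≤ C' max(1, δ^{-(p-1)/(1-a)})` with `C' = C'(a,p,C)`. -/
theorem ode_blowup_subcritical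
    (p a C : ℝ) (hp : 1 < p) (ha0 : 0 ≤ a) (ha1 : a < 1) (hC : 0 < C) :
    ∃ C' > (0 : ℝ), ∀ (δ T : ℝ) (F : ℝ → ℝ), 0 < δ → 1 < T →
      (∀ M ∈ Set.Ico (1 : ℝ) T, DifferentiableAt ℝ F M) →
      (∀ M ∈ Set.Ico (1 : ℝ) T, 0 ≤ F M) →
      (∀ M ∈ Set.Ico (1 : ℝ) T, C * (δ + F M) ^ p ≤ M ^ a * deriv F M) →
      T ^ (1 - a) ≤ 1 + ((1 - a) / (C * (p - 1))) * δ ^ (1 - p) ∧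
      T ≤ C' * max 1 (δ ^ (-(p - 1) / (1 - a))) := by
  obtain ⟨C', hC', hbound⟩ := ode_blowup_subcritical_general p a C hp ha1 hC
  exact ⟨C', hC', fun δ T F hδ hT hF' hF₀ hode ↦ hbound δ T F hδ hT
    (fun M hM ↦ (hF' M hM).continuousAt.continuousWithinAt)
    (fun M hM ↦ hF' M (Ioo_subset_Ico_self hM)) hF₀
    fun M hM ↦ hode M (Ioo_subset_Ico_self hM)⟩
end

section
/- Let p > 1, C > 0, δ > 0, and T > 1. Suppose F : [1,T) → ℝ is differentiable with F(M) ≥ 0 and M F'(M) ≥ C (δ + F(M))^{p} for all M ∈ [1,T). Then ln T ≤ δ^{1−p}/(C(p−1)); in particular T ≤ exp(δ^{1−p}/(C(p−1))). -/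
open Real Set

/-!
The quantity `y = δ + F` satisfies `y' ≥ C y ^ p / M`, and `M ↦ C log M` is a primitive of `C / M`.
Since `(y ^ (1 - p))' = -(p - 1) y' / y ^ p`, the positive quantity `y ^ (1 - p)` decreases at least
as fast as `(p - 1) C log M` grows, so `log M` can only grow by `y(1) ^ (1 - p) / (C (p - 1))`.
Positivity of `y` propagates from the initial time, because `y' > 0` whenever `y = y(1)`.
-/

section Bernoulli

variable {y y' g g' : ℝ → ℝ} {a b p : ℝ}

theorem mul_sub_le_rpow_sub_rpow_of_mul_rpow_le_deriv_right (hp : 1 ≤ p)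
    (hy : ContinuousOn y (Icc a b)) (hy' : ∀ t ∈ Ico a b, HasDerivWithinAt y (y' t) (Ici t) t)
    (hg : ContinuousOn g (Icc a b)) (hg' : ∀ t ∈ Ico a b, HasDerivWithinAt g (g' t) (Ici t) t)
    (hpos : ∀ t ∈ Icc a b, 0 < y t) (hode : ∀ t ∈ Ico a b, g' t * y t ^ p ≤ y' t)
    {t : ℝ} (ht : t ∈ Icc a b) :
    (p - 1) * (g t - g a) ≤ y a ^ (1 - p) - y t ^ (1 - p) := by
  have growth_le : ∀ s ∈ Ico a b,
      (p - 1) * g' s ≤ -(y' s * (1 - p) * y s ^ (1 - p - 1)) := fun s hs ↦ by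
    have hys := hpos s (Ico_subset_Icc_self hs)
    calc (p - 1) * g' s
        ≤ (p - 1) * (y' s / y s ^ p) :=
          mul_le_mul_of_nonneg_left ((le_div_iff₀ (rpow_pos_of_pos hys p)).2 (hode s hs))
            (sub_nonneg.2 hp)
      _ = -(y' s * (1 - p) * y s ^ (1 - p - 1)) := by
          rw [show 1 - p - 1 = -p by ring, rpow_neg hys.le]
          ring
  exact image_le_of_deriv_right_le_deriv_boundary
    (f := fun s ↦ (p - 1) * (g s - g a)) (B := fun s ↦ y a ^ (1 - p) - y s ^ (1 - p))
    ((hg.sub continuousOn_const).const_mul _)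
    (fun s hs ↦ ((hg' s hs).sub_const _).const_mul _)
    (by simp)
    (continuousOn_const.sub (hy.rpow_const fun s hs ↦ Or.inl (hpos s hs).ne'))
    (fun s hs ↦ ((hy' s hs).rpow_const
      (Or.inl (hpos s (Ico_subset_Icc_self hs)).ne')).const_sub _)
    growth_le ht

theorem sub_lt_rpow_div_of_mul_rpow_le_deriv_right (hp : 1 < p) (hab : a ≤ b)
    (hy : ContinuousOn y (Icc a b)) (hy' : ∀ t ∈ Ico a b, HasDerivWithinAt y (y' t) (Ici t) t)
    (hg : ContinuousOn g (Icc a b)) (hg' : ∀ t ∈ Ico a b, HasDerivWithinAt g (g' t) (Ici t) t)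
    (hya : 0 < y a) (hg'_pos : ∀ t ∈ Ico a b, 0 < g' t)
    (hode : ∀ t ∈ Ico a b, g' t * y t ^ p ≤ y' t) :
    g b - g a < y a ^ (1 - p) / (p - 1) := by
  have initial_le : ∀ t ∈ Icc a b, y a ≤ y t :=
    image_le_of_deriv_right_lt_deriv_boundary' continuousOn_const
      (fun t _ ↦ hasDerivWithinAt_const t _ (y a)) le_rfl hy hy' fun t ht heq ↦
        (mul_pos (hg'_pos t ht) (rpow_pos_of_pos (heq ▸ hya) p)).trans_le (hode t ht)
  have hpos : ∀ t ∈ Icc a b, 0 < y t := fun t ht ↦ hya.trans_le (initial_le t ht)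
  have hb : b ∈ Icc a b := right_mem_Icc.2 hab
  rw [lt_div_iff₀' (sub_pos.2 hp)]
  calc (p - 1) * (g b - g a)
      ≤ y a ^ (1 - p) - y b ^ (1 - p) :=
        mul_sub_le_rpow_sub_rpow_of_mul_rpow_le_deriv_right hp.le hy hy' hg hg' hpos hode hb
    _ < y a ^ (1 - p) := sub_lt_self _ (rpow_pos_of_pos (hpos b hb) _)

end Bernoulli

theorem log_div_lt_of_mul_rpow_le_mul_deriv_right {p C a b : ℝ} {y y' : ℝ → ℝ} (hp : 1 < p)
    (hC : 0 < C) (ha : 0 < a) (hab : a ≤ b) (hy : ContinuousOn y (Icc a b))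
    (hy' : ∀ t ∈ Ico a b, HasDerivWithinAt y (y' t) (Ici t) t) (hya : 0 < y a)
    (hode : ∀ t ∈ Ico a b, C * y t ^ p ≤ t * y' t) :
    log (b / a) < y a ^ (1 - p) / (C * (p - 1)) := by
  have hlog : ∀ t, a ≤ t → HasDerivAt (fun s ↦ C * log s) (C * t⁻¹) t := fun t ht ↦
    (hasDerivAt_log (ha.trans_le ht).ne').const_mul C
  have key : C * log b - C * log a < y a ^ (1 - p) / (p - 1) :=
    sub_lt_rpow_div_of_mul_rpow_le_deriv_right hp hab hy hy'
      (fun t ht ↦ (hlog t ht.1).continuousAt.continuousWithinAt)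
      (fun t ht ↦ (hlog t ht.1).hasDerivWithinAt) hya
      (fun t ht ↦ mul_pos hC (inv_pos.2 (ha.trans_le ht.1)))
      fun t ht ↦ by
        rw [mul_right_comm, ← div_eq_mul_inv, div_le_iff₀' (ha.trans_le ht.1)]
        exact hode t ht
  rwa [log_div (ha.trans_le hab).ne' ha.ne', mul_comm C, ← div_div, lt_div_iff₀' hC, mul_sub]

theorem ode_blowup_critical_general {p C δ a T : ℝ} {F F' : ℝ → ℝ} (hp : 1 < p) (hC : 0 < C)
    (hδ : 0 < δ) (ha : 0 < a) (haT : a < T) (hF : ContinuousOn F (Ico a T))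
    (hF' : ∀ M ∈ Ico a T, HasDerivWithinAt F (F' M) (Ici M) M) (hFa : 0 ≤ F a)
    (hode : ∀ M ∈ Ico a T, C * (δ + F M) ^ p ≤ M * F' M) :
    log (T / a) ≤ δ ^ (1 - p) / (C * (p - 1)) := by
  have log_le : ∀ M ∈ Ioo a T, log (M / a) ≤ δ ^ (1 - p) / (C * (p - 1)) := fun M hM ↦ by
    have hIcc : Icc a M ⊆ Ico a T := Icc_subset_Ico_right hM.2
    have hIco : Ico a M ⊆ Ico a T := Ico_subset_Ico_right hM.2.le
    calc log (M / a)
        ≤ (δ + F a) ^ (1 - p) / (C * (p - 1)) :=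
          (log_div_lt_of_mul_rpow_le_mul_deriv_right (y := fun t ↦ δ + F t) hp hC ha hM.1.le
            (continuousOn_const.add (hF.mono hIcc)) (fun t ht ↦ (hF' t (hIco ht)).const_add δ)
            (by positivity) fun t ht ↦ hode t (hIco ht)).le
      _ ≤ δ ^ (1 - p) / (C * (p - 1)) :=
          div_le_div_of_nonneg_right
            (rpow_le_rpow_of_nonpos hδ (le_add_of_nonneg_right hFa) (sub_nonpos.2 hp.le))
            (mul_pos hC (sub_pos.2 hp)).le
  have hcont : ContinuousAt (fun M ↦ log (M / a)) T :=
    (continuousAt_id.div_const a).log (div_pos (ha.trans haT) ha).ne'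
  exact le_of_tendsto (hcont.mono_left nhdsWithin_le_nhds)
    (Filter.eventually_of_mem (Ioo_mem_nhdsLT haT) log_le)

/-- **ODE blow-up lemma, critical case** (Fino–Hamza): if `F ≥ 0` is differentiable on
`[1,T)` with `M F'(M) ≥ C (δ + F(M))^p` there, where `p > 1` and `C, δ > 0`, then
`ln T ≤ δ^{1-p}/(C(p-1))`; in particular `T ≤ exp(δ^{1-p}/(C(p-1)))`. -/
theorem ode_blowup_critical
    (p C : ℝ) (hp : 1 < p) (hC : 0 < C)
    (δ T : ℝ) (F : ℝ → ℝ) (hδ : 0 < δ) (hT : 1 < T)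
    (hdiff : ∀ M ∈ Set.Ico (1 : ℝ) T, DifferentiableAt ℝ F M)
    (hF0 : ∀ M ∈ Set.Ico (1 : ℝ) T, 0 ≤ F M)
    (hode : ∀ M ∈ Set.Ico (1 : ℝ) T, C * (δ + F M) ^ p ≤ M * deriv F M) :
    Real.log T ≤ δ ^ (1 - p) / (C * (p - 1)) ∧
    T ≤ Real.exp (δ ^ (1 - p) / (C * (p - 1))) := by
  have hlog : log T ≤ δ ^ (1 - p) / (C * (p - 1)) := by
    simpa only [div_one] using ode_blowup_critical_general hp hC hδ one_pos hT
      (fun M hM ↦ (hdiff M hM).continuousAt.continuousWithinAt)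
      (fun M hM ↦ (hdiff M hM).hasDerivAt.hasDerivWithinAt) (hF0 1 (left_mem_Ico.2 hT)) hode
  exact ⟨hlog, (log_le_iff_le_exp (one_pos.trans hT)).1 hlog⟩
end
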